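/- Let X be a real inner product space, K ≥ 1 an integer, and X̄ = X^K the product space with inner product ⟨x̄, ȳ⟩ = Σ_{k=1}^K ⟨x̄_k, ȳ_k⟩. Let C_1, …, C_K ⊆ X be nonempty convex sets, let A = C_1 × ⋯ × C_K ⊆ X̄, and let C = C_1 + ⋯ + C_K ⊆ X be their Minkowski sum. Let F : X → X be any map. Then for every x̄∘ ∈ A, the point x̄∘ is a solution of the variational inequality VI(Q⁺ ∘ F ∘ Q⁻, A) in X̄ if and only if Q⁻(x̄∘) is a solution of the variational inequality VI(F, C) in X. -/

import Mathlib

open RealInnerProductSpace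

/-!
The diagonal map `Q⁺` is adjoint to the summation map `Q⁻`, and the Minkowski sum is the image of
the product under `Q⁻`. For any map `Q` with adjoint `T`, the identity
`⟪T (F (Q x)), y - x⟫ = ⟪F (Q x), Q y - Q x⟫` transfers the inequalities over `A` to those over
`Q '' A`.
-/

open scoped Pointwise

section VariationalInequality

variable {H X : Type*} [SeminormedAddCommGroup H] [InnerProductSpace ℝ H]
  [SeminormedAddCommGroup X] [InnerProductSpace ℝ X]

/-- `x` is a solution of the variational inequality `VI(F, A)`. -/
def IsVISolution (F : X → X) (A : Set X) (x : X) : Prop :=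
  x ∈ A ∧ ∀ y ∈ A, 0 ≤ ⟪F x, y - x⟫

theorem isVISolution_comp_iff_image {Q : H → X} {T : X → H}
    (hT : ∀ u y, ⟪T u, y⟫ = ⟪u, Q y⟫) (F : X → X) {A : Set H} {x : H} (hx : x ∈ A) :
    IsVISolution (T ∘ F ∘ Q) A x ↔ IsVISolution F (Q '' A) (Q x) := by
  have inner_sub_eq (u : X) (y : H) : ⟪T u, y - x⟫ = ⟪u, Q y - Q x⟫ := by
    rw [inner_sub_right, inner_sub_right, hT, hT]
  simp only [IsVISolution, hx, Set.mem_image_of_mem, Set.forall_mem_image, Function.comp_apply,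
    inner_sub_eq, true_and]

end VariationalInequality

section ProductSpace

variable {ι X : Type*} [Fintype ι]

/-- The map `Q⁻` from the product space `X^ι` to `X` that sums the coordinates. -/
def coordSum [AddCommMonoid X] (x : PiLp 2 fun _ : ι => X) : X :=
  ∑ i, x i

/-- The map `Q⁺` from `X` to the product space `X^ι` that repeats a vector in every coordinate. -/
def diagonalMap (x : X) : PiLp 2 fun _ : ι => X :=
  WithLp.toLp 2 (Function.const ι x)

theorem image_coordSum_pi [AddCommMonoid X] (C : ι → Set X) :
    coordSum '' {x : PiLp 2 fun _ : ι => X | ∀ i, x i ∈ C i} = ∑ i, C i := by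
  ext w
  rw [Set.mem_fintype_sum]
  constructor
  · rintro ⟨x, hx, rfl⟩
    exact ⟨x, hx, rfl⟩
  · rintro ⟨c, hc, rfl⟩
    exact ⟨WithLp.toLp 2 c, hc, rfl⟩

variable [NormedAddCommGroup X] [InnerProductSpace ℝ X]

theorem inner_diagonalMap_left (u : X) (y : PiLp 2 fun _ : ι => X) :
    ⟪diagonalMap u, y⟫ = ⟪u, coordSum y⟫ :=
  (inner_sum Finset.univ (fun i => y i) u).symm

theorem stmt_13_general (C : ι → Set X) (F : X → X) {x : PiLp 2 fun _ : ι => X}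
    (hx : ∀ i, x i ∈ C i) :
    IsVISolution (diagonalMap ∘ F ∘ coordSum) {y : PiLp 2 fun _ : ι => X | ∀ i, y i ∈ C i} x ↔
      IsVISolution F (∑ i, C i) (coordSum x) := by
  rw [← image_coordSum_pi]
  exact isVISolution_comp_iff_image inner_diagonalMap_left F hx

end ProductSpace

/-- Minkowski-sum decoupling: with `A = C₁ × ⋯ × C_K ⊆ X̄ = Xᴷ` (product inner product,
`PiLp 2`), `C = C₁ + ⋯ + C_K ⊆ X` the Minkowski sum, `Q⁻ xb = ∑ k, xb k`, `Q⁺` the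
diagonal map, and `G = Q⁺ ∘ F ∘ Q⁻`, a point `xb₀ ∈ A` solves `VI(G, A)` iff
`Q⁻ xb₀` solves `VI(F, C)`. -/
theorem stmt_13 {X : Type*} [NormedAddCommGroup X] [InnerProductSpace ℝ X]
    (K : ℕ) (hK : 1 ≤ K)
    (C : Fin K → Set X) (hCne : ∀ k, (C k).Nonempty) (hCcv : ∀ k, Convex ℝ (C k))
    (F : X → X)
    (G : PiLp 2 (fun _ : Fin K => X) → PiLp 2 (fun _ : Fin K => X))
    (hG : ∀ (xb : PiLp 2 (fun _ : Fin K => X)) (k : Fin K), G xb k = F (∑ j, xb j))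
    (Csum : Set X)
    (hCsum : Csum = {x : X | ∃ c : Fin K → X, (∀ k, c k ∈ C k) ∧ x = ∑ k, c k})
    (xb₀ : PiLp 2 (fun _ : Fin K => X)) (hxb₀ : ∀ k, xb₀ k ∈ C k) :
    ((∀ k, xb₀ k ∈ C k) ∧
        ∀ yb : PiLp 2 (fun _ : Fin K => X), (∀ k, yb k ∈ C k) → 0 ≤ ⟪G xb₀, yb - xb₀⟫) ↔
      ((∑ k, xb₀ k) ∈ Csum ∧ ∀ w ∈ Csum, 0 ≤ ⟪F (∑ k, xb₀ k), w - ∑ k, xb₀ k⟫) := by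
  obtain rfl : G = diagonalMap ∘ F ∘ coordSum := funext fun xb => PiLp.ext (hG xb)
  obtain rfl : Csum = ∑ k, C k := by ext w; simp [hCsum, Set.mem_fintype_sum, eq_comm]
  exact stmt_13_general C F hxb₀
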